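/- arXiv:2602.01110 — 2 statements merged into one kernel-verified Lean document; each statement's English description precedes it below -/
import Mathlib

section
/- Let Γ be a thick generalised hexagon, and let x1, x2, x3 be a round-up triple of points of Γ such that x1 and x2 are special; let c = [x1,x2] be their unique common collinear point. Then for every point y of Γ that is opposite c and special to both x1 and x2, each of x1, x2 and x3 is collinear to c and special to y. -/
/-- An incidence structure of points and lines, each line being a set of points. -/
structure GenHexagon where
  Point : Type
  Line : Type
  pts : Line → Set Point

namespace GenHexagon

variable (Γ : GenHexagon)

/-- Adjacency of the bipartite incidence graph on the disjoint union of points and lines: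
a point is adjacent to a line iff the point lies on the line. -/
def incAdj : Γ.Point ⊕ Γ.Line → Γ.Point ⊕ Γ.Line → Prop
  | Sum.inl x, Sum.inr L => x ∈ Γ.pts L
  | Sum.inr L, Sum.inl x => x ∈ Γ.pts L
  | _, _ => False

/-- The bipartite incidence graph. -/
def incGraph : SimpleGraph (Γ.Point ⊕ Γ.Line) where
  Adj := Γ.incAdj
  symm := ⟨by rintro (x | L) (y | M) h <;> simp_all [incAdj]⟩
  loopless := ⟨by rintro (x | L) h <;> simp_all [incAdj]⟩

/-- `Γ` is a generalised hexagon: its incidence graph has diameter `6` and girth `12`. -/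
def IsGenHexagon : Prop :=
  Γ.incGraph.ediam = 6 ∧ Γ.incGraph.egirth = 12

/-- Two points are collinear if they are distinct and some line contains both. -/
def Collinear (x y : Γ.Point) : Prop :=
  x ≠ y ∧ ∃ L, x ∈ Γ.pts L ∧ y ∈ Γ.pts L

/-- Two points are special if they are distinct, non-collinear, and collinear
to a common point. -/
def Special (x y : Γ.Point) : Prop :=
  x ≠ y ∧ ¬ Γ.Collinear x y ∧ ∃ z, Γ.Collinear x z ∧ Γ.Collinear y z

/-- Two points are opposite if they are distinct, non-collinear and non-special. -/
def Opposite (x y : Γ.Point) : Prop :=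
  x ≠ y ∧ ¬ Γ.Collinear x y ∧ ¬ Γ.Special x y

/-- `Γ` has order `(s, t)`: every line contains exactly `s + 1` points and every
point lies on exactly `t + 1` lines. -/
def HasOrder (s t : ℕ) : Prop :=
  (∀ L, (Γ.pts L).encard = s + 1) ∧ (∀ x, {L | x ∈ Γ.pts L}.encard = t + 1)

/-- `Γ` is thick: every line contains at least `3` points and every point lies on
at least `3` lines. -/
def Thick : Prop :=
  (∀ L, 3 ≤ (Γ.pts L).encard) ∧ (∀ x, 3 ≤ {L | x ∈ Γ.pts L}.encard)

/-- A point is close to a line if it is collinear to exactly one point of that line. -/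
def CloseTo (x : Γ.Point) (L : Γ.Line) : Prop :=
  ∃! y, y ∈ Γ.pts L ∧ Γ.Collinear x y

/-- Two lines are opposite if they are disjoint and no point of one is collinear to
a point of the other. -/
def OppLines (L M : Γ.Line) : Prop :=
  (∀ x ∈ Γ.pts L, x ∉ Γ.pts M) ∧
  (∀ x ∈ Γ.pts L, ∀ y ∈ Γ.pts M, ¬ Γ.Collinear x y)

/-- The distance-3 trace `[L,M]₃` of two (opposite) lines: the set of points close to
both `L` and `M`. -/
def trace3 (L M : Γ.Line) : Set Γ.Point :=
  {x | Γ.CloseTo x L ∧ Γ.CloseTo x M}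

/-- The distance-3 trace `[L,M]₃` is regular if `[N,M]₃ = [L,M]₃` for every line `N`
opposite `M` such that `[N,M]₃` and `[L,M]₃` share at least two points. -/
def RegularTrace3 (L M : Γ.Line) : Prop :=
  ∀ N, Γ.OppLines N M → (Γ.trace3 N M ∩ Γ.trace3 L M).Nontrivial →
    Γ.trace3 N M = Γ.trace3 L M

/-- A hyperbolic line: a set `H` of pairwise special points, all collinear to a common
point `p`, such that for every point `q` opposite `p` to which at least two points of `H`
are special, the set of points special to `q` and collinear to `p` equals `H`. -/
def IsHyperbolicLine (H : Set Γ.Point) : Prop :=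
  (∀ x ∈ H, ∀ y ∈ H, x ≠ y → Γ.Special x y) ∧
  ∃ p, (∀ x ∈ H, Γ.Collinear x p) ∧
    ∀ q, Γ.Opposite q p → {x ∈ H | Γ.Special q x}.Nontrivial →
      {x | Γ.Special q x ∧ Γ.Collinear x p} = H

/-- A round-up triple: no point of `Γ` is opposite exactly one of `x₁, x₂, x₃`. -/
def RoundUpTriple (x₁ x₂ x₃ : Γ.Point) : Prop :=
  ∀ y : Γ.Point,
    ¬ ((Γ.Opposite y x₁ ∧ ¬ Γ.Opposite y x₂ ∧ ¬ Γ.Opposite y x₃) ∨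
       (¬ Γ.Opposite y x₁ ∧ Γ.Opposite y x₂ ∧ ¬ Γ.Opposite y x₃) ∨
       (¬ Γ.Opposite y x₁ ∧ ¬ Γ.Opposite y x₂ ∧ Γ.Opposite y x₃))

/-- A geometric line: a set `T` of points such that each point of `Γ` is either opposite
no member of `T`, or non-opposite to exactly one member of `T`. -/
def IsGeometricLine (T : Set Γ.Point) : Prop :=
  ∀ y : Γ.Point, (∀ x ∈ T, ¬ Γ.Opposite y x) ∨ (∃! x, x ∈ T ∧ ¬ Γ.Opposite y x)

end GenHexagon

/-- If a path and a walk with the same ends have total length less than the girth, then the walk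
uses every edge of the path. -/
theorem SimpleGraph.Walk.edges_subset_of_length_add_lt_egirth {V : Type*} {G : SimpleGraph V}
    {u v : V} {p q : G.Walk u v} (hp : p.IsPath)
    (h : ((p.length + q.length : ℕ) : ℕ∞) < G.egirth) : p.edges ⊆ q.edges := by
  classical
  let H : SimpleGraph V := .fromEdgeSet {e | e ∈ p.edges ∨ e ∈ q.edges}
  have hHG : H ≤ G := by
    intro a b hab
    rcases ((SimpleGraph.fromEdgeSet_adj _).1 hab).1 with h | h
    exacts [p.adj_of_mem_edges h, q.adj_of_mem_edges h]
  have hmem : ∀ e ∈ G.edgeSet, e ∈ p.edges ∨ e ∈ q.edges → e ∈ H.edgeSet := fun e he h => by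
    rw [SimpleGraph.edgeSet_fromEdgeSet]
    exact ⟨h, G.not_isDiag_of_mem_edgeSet he⟩
  have hH : H.IsAcyclic := by
    intro a w hw
    have hle : w.length ≤ p.length + q.length := by
      have hsub : w.edges ⊆ p.edges ++ q.edges := fun e he => by
        have := w.edges_subset_edgeSet he
        rw [SimpleGraph.edgeSet_fromEdgeSet] at this
        exact List.mem_append.2 this.1
      simpa using (hw.edges_nodup.subperm hsub).length_le
    have hge := (hw.mapLe hHG).egirth_le_length
    rw [SimpleGraph.Walk.length_map] at hge
    exact absurd (hge.trans (by exact_mod_cast hle)) (not_le.2 h)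
  have hpH : ∀ e ∈ p.edges, e ∈ H.edgeSet := fun e he =>
    hmem e (p.edges_subset_edgeSet he) (.inl he)
  have hqH : ∀ e ∈ q.edges, e ∈ H.edgeSet := fun e he =>
    hmem e (q.edges_subset_edgeSet he) (.inr he)
  have heq := (hH.subsingleton_path u v).elim
    ⟨p.transfer H hpH, hp.transfer hpH⟩ (q.transfer H hqH).toPath
  intro e he
  rw [← p.edges_transfer hpH] at he
  rw [← q.edges_transfer hqH]
  exact SimpleGraph.Walk.edges_bypass_subset_edges _ (congrArg (fun r => r.1.edges) heq ▸ he)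

namespace GenHexagon

variable {Γ : GenHexagon}

theorem incGraph_adj_point_line {x : Γ.Point} {L : Γ.Line} (h : x ∈ Γ.pts L) :
    Γ.incGraph.Adj (.inl x) (.inr L) := h

theorem incGraph_adj_line_point {x : Γ.Point} {L : Γ.Line} (h : x ∈ Γ.pts L) :
    Γ.incGraph.Adj (.inr L) (.inl x) := h

theorem Collinear.symm {x y : Γ.Point} (h : Γ.Collinear x y) : Γ.Collinear y x :=
  ⟨h.1.symm, h.2.imp fun _ h => h.symm⟩

theorem Collinear.not_opposite {x y : Γ.Point} (h : Γ.Collinear x y) : ¬ Γ.Opposite x y :=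
  fun ho => ho.2.1 h

/-- Points collinear to a common point are not opposite. -/
theorem not_opposite_of_collinear {x y z : Γ.Point} (hx : Γ.Collinear x z)
    (hy : Γ.Collinear y z) : ¬ Γ.Opposite x y :=
  fun ho => ho.2.2 ⟨ho.1, ho.2.1, z, hx, hy⟩

/-- If `y` is opposite `c`, then `y` is special to each point collinear to `c` and not opposite `y`. -/
theorem Opposite.special_of_collinear {x y c : Γ.Point} (hyc : Γ.Opposite y c)
    (hxc : Γ.Collinear x c) (hyx : ¬ Γ.Opposite y x) : Γ.Special y x := by
  have hne : y ≠ x := fun h => hyc.2.1 (h ▸ hxc)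
  have hnc : ¬ Γ.Collinear y x := fun h => not_opposite_of_collinear h hxc.symm hyc
  by_contra hs
  exact hyx ⟨hne, hnc, hs⟩

/-- A point special to `c` is opposite some point collinear to `c`. -/
theorem Special.exists_collinear_opposite (hΓ : 12 ≤ Γ.incGraph.egirth) (hth : Γ.Thick)
    {c x : Γ.Point} (h : Γ.Special c x) : ∃ z, Γ.Collinear z c ∧ Γ.Opposite z x := by
  obtain ⟨hne, hnc, m, ⟨hcm, L, hcL, hmL⟩, hxm, M, hxM, hmM⟩ := h
  obtain ⟨N, hcN, hNL⟩ : ∃ N ∈ {K | c ∈ Γ.pts K}, N ≠ L :=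
    (Set.one_lt_encard_iff_nontrivial.1
      (lt_of_lt_of_le (by norm_num) (hth.2 c))).exists_ne L
  obtain ⟨z, hzN, hzc⟩ : ∃ z ∈ Γ.pts N, z ≠ c :=
    (Set.one_lt_encard_iff_nontrivial.1
      (lt_of_lt_of_le (by norm_num) (hth.1 N))).exists_ne c
  have hLM : L ≠ M := fun h => hnc ⟨hne, L, hcL, h ▸ hxM⟩
  let p : Γ.incGraph.Walk (.inl c) (.inl x) :=
    .cons (incGraph_adj_point_line hcL) <| .cons (incGraph_adj_line_point hmL) <|
      .cons (incGraph_adj_point_line hmM) <| .cons (incGraph_adj_line_point hxM) .nil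
  have hp : p.IsPath := by
    simp [p, SimpleGraph.Walk.cons_isPath_iff, hne, hcm, hxm.symm, hLM]
  have hedge : ∀ q : Γ.incGraph.Walk (.inl c) (.inl x), q.length ≤ 6 →
      s(.inl c, .inr L) ∈ q.edges := fun q hq => by
    refine SimpleGraph.Walk.edges_subset_of_length_add_lt_egirth hp
      (lt_of_lt_of_le ?_ hΓ) (by simp [p])
    have : p.length + q.length < 12 := by
      have : p.length = 4 := rfl
      omega
    exact_mod_cast this
  refine ⟨z, ⟨hzc, N, hzN, hcN⟩, ?_, ?_, ?_⟩
  · rintro rfl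
    exact hnc ⟨hne, N, hcN, hzN⟩
  · rintro ⟨-, K, hzK, hxK⟩
    have := hedge (.cons (incGraph_adj_point_line hcN) <|
      .cons (incGraph_adj_line_point hzN) <| .cons (incGraph_adj_point_line hzK) <|
      .cons (incGraph_adj_line_point hxK) .nil) (by simp)
    simp [hNL.symm, hne, hzc.symm] at this
  · rintro ⟨-, -, w, ⟨-, K, hzK, hwK⟩, hxw, R, hxR, hwR⟩
    have hcw : c ≠ w := by
      rintro rfl
      exact hnc ⟨hne, R, hwR, hxR⟩
    have := hedge (.cons (incGraph_adj_point_line hcN) <|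
      .cons (incGraph_adj_line_point hzN) <| .cons (incGraph_adj_point_line hzK) <|
      .cons (incGraph_adj_line_point hwK) <| .cons (incGraph_adj_point_line hwR) <|
      .cons (incGraph_adj_line_point hxR) .nil) (by simp)
    simp [hNL.symm, hne, hzc.symm, hcw] at this

/-- A point not opposite `x₁` and `x₂` is not opposite the third point of a round-up triple. -/
theorem RoundUpTriple.not_opposite {x₁ x₂ x₃ y : Γ.Point} (h : Γ.RoundUpTriple x₁ x₂ x₃)
    (h₁ : ¬ Γ.Opposite y x₁) (h₂ : ¬ Γ.Opposite y x₂) : ¬ Γ.Opposite y x₃ :=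
  fun h₃ => h y (.inr (.inr ⟨h₁, h₂, h₃⟩))

end GenHexagon

/-- A round-up triple of points of a thick generalised hexagon with `x₁` and `x₂`
special, with common collinear point `c`: for every point `y` opposite `c` and special
to both `x₁` and `x₂`, each of `x₁, x₂, x₃` is collinear to `c` and special to `y`. -/
theorem roundUpTriple_special (Γ : GenHexagon) (hΓ : Γ.IsGenHexagon) (hth : Γ.Thick)
    (x₁ x₂ x₃ : Γ.Point) (hrut : Γ.RoundUpTriple x₁ x₂ x₃)
    (hsp : Γ.Special x₁ x₂)
    (c : Γ.Point) (hc₁ : Γ.Collinear x₁ c) (hc₂ : Γ.Collinear x₂ c) :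
    ∀ y : Γ.Point, Γ.Opposite y c → Γ.Special y x₁ → Γ.Special y x₂ →
      (Γ.Collinear x₁ c ∧ Γ.Special y x₁) ∧
      (Γ.Collinear x₂ c ∧ Γ.Special y x₂) ∧
      (Γ.Collinear x₃ c ∧ Γ.Special y x₃) := by
  intro y hyc hy₁ hy₂
  have hy₃ : ¬ Γ.Opposite y x₃ := hrut.not_opposite (fun h => h.2.2 hy₁) (fun h => h.2.2 hy₂)
  have hc₃ : Γ.Collinear x₃ c := by
    have hne : c ≠ x₃ := fun h => hy₃ (h ▸ hyc)
    by_contra hnc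
    have hnc' : ¬ Γ.Collinear c x₃ := fun h => hnc h.symm
    by_cases hs : Γ.Special c x₃
    · obtain ⟨z, hzc, hz₃⟩ := hs.exists_collinear_opposite hΓ.2.ge hth
      exact hrut.not_opposite (GenHexagon.not_opposite_of_collinear hzc hc₁)
        (GenHexagon.not_opposite_of_collinear hzc hc₂) hz₃
    · exact hrut.not_opposite hc₁.symm.not_opposite hc₂.symm.not_opposite ⟨hne, hnc', hs⟩
  exact ⟨⟨hc₁, hy₁⟩, ⟨hc₂, hy₂⟩, hc₃, hyc.special_of_collinear hc₃ hy₃⟩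
end

section
/- Let Γ be a thick generalised hexagon and let T be a geometric line of Γ containing at least two points. Then T is either the point set of a line of Γ, or a hyperbolic line of Γ, or a regular distance-3 trace of Γ. -/
namespace GenHexagon

variable (Γ : GenHexagon)

/-- In any graph, two paths with the same ends whose lengths add up to less than the girth
coincide. -/
theorem path_eq_of_length_add_lt_egirth {V : Type*} {G : SimpleGraph V} {v w : V}
    {p q : G.Walk v w} (hp : p.IsPath) (hq : q.IsPath)
    (hlt : ((p.length + q.length : ℕ) : ℕ∞) < G.egirth) : p = q := by
  classical
  set H := SimpleGraph.fromEdgeSet {e | e ∈ p.edges ∨ e ∈ q.edges} with hH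
  have mem_H : ∀ e ∈ G.edgeSet, e ∈ p.edges ∨ e ∈ q.edges → e ∈ H.edgeSet := by
    intro e he h
    rw [hH, SimpleGraph.edgeSet_fromEdgeSet]
    exact ⟨h, G.not_isDiag_of_mem_edgeSet he⟩
  have of_mem_H : ∀ e ∈ H.edgeSet, e ∈ p.edges ∨ e ∈ q.edges := by
    intro e he
    rw [hH, SimpleGraph.edgeSet_fromEdgeSet] at he
    exact he.1
  have hpH : ∀ e ∈ p.edges, e ∈ H.edgeSet := fun e he =>
    mem_H e (p.edges_subset_edgeSet he) (Or.inl he)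
  have hqH : ∀ e ∈ q.edges, e ∈ H.edgeSet := fun e he =>
    mem_H e (q.edges_subset_edgeSet he) (Or.inr he)
  have hacyc : H.IsAcyclic := by
    intro a c hc
    have hcG : ∀ e ∈ c.edges, e ∈ G.edgeSet := fun e he =>
      (of_mem_H e (c.edges_subset_edgeSet he)).elim
        (fun h => p.edges_subset_edgeSet h) (fun h => q.edges_subset_edgeSet h)
    have hle := SimpleGraph.egirth_le_length (hc.transfer hcG)
    rw [SimpleGraph.Walk.length_transfer] at hle
    have hcard : c.length ≤ p.length + q.length := by
      rw [← c.length_edges, ← p.length_edges, ← q.length_edges, ← List.length_append]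
      refine (hc.edges_nodup.subperm ?_).length_le
      intro e he
      exact List.mem_append.2 (of_mem_H e (c.edges_subset_edgeSet he))
    exact absurd (lt_of_le_of_lt hle (lt_of_le_of_lt (by exact_mod_cast hcard) hlt))
      (lt_irrefl _)
  have heq := congrArg Subtype.val ((hacyc.subsingleton_path v w).elim
    ⟨p.transfer H hpH, hp.transfer hpH⟩ ⟨q.transfer H hqH, hq.transfer hqH⟩)
  have hsupp := congrArg SimpleGraph.Walk.support heq
  simp only [SimpleGraph.Walk.support_transfer] at hsupp
  exact SimpleGraph.Walk.ext_support hsupp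

variable {Γ}

/-- Distance in the incidence graph. -/
noncomputable abbrev d (u v : Γ.Point ⊕ Γ.Line) : ℕ := Γ.incGraph.dist u v

theorem adj_inl_inr {x : Γ.Point} {L : Γ.Line} :
    Γ.incGraph.Adj (Sum.inl x) (Sum.inr L) ↔ x ∈ Γ.pts L := Iff.rfl

theorem adj_inr_inl {x : Γ.Point} {L : Γ.Line} :
    Γ.incGraph.Adj (Sum.inr L) (Sum.inl x) ↔ x ∈ Γ.pts L := Iff.rfl

theorem exists_inr_of_adj_inl {x : Γ.Point} {v : Γ.Point ⊕ Γ.Line}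
    (h : Γ.incGraph.Adj (Sum.inl x) v) : ∃ L, v = Sum.inr L := by
  rcases v with y | L
  · exact h.elim
  · exact ⟨L, rfl⟩

theorem exists_inl_of_adj_inr {L : Γ.Line} {v : Γ.Point ⊕ Γ.Line}
    (h : Γ.incGraph.Adj (Sum.inr L) v) : ∃ x, v = Sum.inl x := by
  rcases v with y | M
  · exact ⟨y, rfl⟩
  · exact h.elim

/-- The colouring of the incidence graph by type (point or line). -/
def typeColoring (Γ : GenHexagon) : Γ.incGraph.Coloring Bool :=
  SimpleGraph.Coloring.mk Sum.isLeft (by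
    rintro (x | L) (y | M) h
    · exact h.elim
    · simp
    · simp
    · exact h.elim)

namespace IsGenHexagon

theorem reachable (hΓ : Γ.IsGenHexagon) (u v : Γ.Point ⊕ Γ.Line) :
    Γ.incGraph.Reachable u v := by
  have h := SimpleGraph.edist_le_ediam (G := Γ.incGraph) (u := u) (v := v)
  rw [hΓ.1] at h
  rw [← SimpleGraph.edist_ne_top_iff_reachable]
  intro h'
  rw [h'] at h
  exact absurd h (by decide)

theorem dist_le_six (hΓ : Γ.IsGenHexagon) (u v : Γ.Point ⊕ Γ.Line) : d u v ≤ 6 := by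
  have h := SimpleGraph.edist_le_ediam (G := Γ.incGraph) (u := u) (v := v)
  rw [hΓ.1, ← (hΓ.reachable u v).coe_dist_eq_edist] at h
  exact_mod_cast h

theorem triangle (hΓ : Γ.IsGenHexagon) (u v w : Γ.Point ⊕ Γ.Line) :
    d u w ≤ d u v + d v w :=
  SimpleGraph.Connected.dist_triangle
    { preconnected := hΓ.reachable, nonempty := ⟨u⟩ }

theorem dist_eq_zero (hΓ : Γ.IsGenHexagon) {u v : Γ.Point ⊕ Γ.Line} : d u v = 0 ↔ u = v :=
  (hΓ.reachable u v).dist_eq_zero_iff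

theorem even_dist_iff (hΓ : Γ.IsGenHexagon) (u v : Γ.Point ⊕ Γ.Line) :
    Even (d u v) ↔ (u.isLeft ↔ v.isLeft) := by
  obtain ⟨p, hp⟩ := (hΓ.reachable u v).exists_walk_length_eq_dist
  rw [d, ← hp]
  exact (typeColoring Γ).even_length_iff_congr p

theorem even_points (hΓ : Γ.IsGenHexagon) (x y : Γ.Point) :
    d (Γ := Γ) (Sum.inl x) (Sum.inl y) % 2 = 0 :=
  Nat.even_iff.1 ((hΓ.even_dist_iff _ _).2 (by simp))

theorem even_lines (hΓ : Γ.IsGenHexagon) (L M : Γ.Line) :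
    d (Γ := Γ) (Sum.inr L) (Sum.inr M) % 2 = 0 :=
  Nat.even_iff.1 ((hΓ.even_dist_iff _ _).2 (by simp))

theorem odd_point_line (hΓ : Γ.IsGenHexagon) (x : Γ.Point) (L : Γ.Line) :
    d (Γ := Γ) (Sum.inl x) (Sum.inr L) % 2 = 1 :=
  Nat.not_even_iff.1 (fun h => by simpa using (hΓ.even_dist_iff _ _).1 h)

/-- Adjacent vertices have distances to a third vertex differing by exactly one. -/
theorem dist_adj (hΓ : Γ.IsGenHexagon) {u v : Γ.Point ⊕ Γ.Line} (h : Γ.incGraph.Adj u v)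
    (w : Γ.Point ⊕ Γ.Line) : d u w = d v w + 1 ∨ d v w = d u w + 1 := by
  have h1 : d u v = 1 := SimpleGraph.dist_eq_one_iff_adj.2 h
  have h2 : d v u = 1 := SimpleGraph.dist_eq_one_iff_adj.2 h.symm
  have t1 := hΓ.triangle u v w
  have t2 := hΓ.triangle v u w
  have huv : (u.isLeft : Prop) ↔ ¬ v.isLeft := by
    rcases u with x | L <;> rcases v with y | M
    · exact h.elim
    · simp
    · simp
    · exact h.elim
  have e1 := hΓ.even_dist_iff u w
  have e2 := hΓ.even_dist_iff v w
  have hne : d u w ≠ d v w := by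
    intro he
    rw [he] at e1
    tauto
  omega

/-- Every vertex different from `w` has a neighbour closer to `w`. -/
theorem exists_closer (hΓ : Γ.IsGenHexagon) {v w : Γ.Point ⊕ Γ.Line} (h : d v w ≠ 0) :
    ∃ a, Γ.incGraph.Adj v a ∧ d v w = d a w + 1 := by
  obtain ⟨p, hp⟩ := (hΓ.reachable v w).exists_walk_length_eq_dist
  cases p with
  | nil => exact absurd (hΓ.dist_eq_zero.2 rfl) h
  | @cons _ a _ hva q =>
    refine ⟨a, hva, ?_⟩
    have hq : d a w ≤ q.length := SimpleGraph.dist_le q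
    simp only [SimpleGraph.Walk.length_cons] at hp
    have := hΓ.dist_adj hva w
    change q.length + 1 = d v w at hp
    omega

/-- The neighbour of `v` closer to `w` is unique when `v` and `w` are not opposite. -/
theorem closer_unique (hΓ : Γ.IsGenHexagon) {v w a b : Γ.Point ⊕ Γ.Line}
    (ha : Γ.incGraph.Adj v a) (hb : Γ.incGraph.Adj v b) (hvw : d v w ≤ 5)
    (haw : d a w < d v w) (hbw : d b w < d v w) : a = b := by
  obtain ⟨p, hp⟩ := (hΓ.reachable a w).exists_walk_length_eq_dist
  obtain ⟨q, hq⟩ := (hΓ.reachable b w).exists_walk_length_eq_dist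
  change p.length = d a w at hp
  change q.length = d b w at hq
  have ea := hΓ.dist_adj ha w
  have eb := hΓ.dist_adj hb w
  have hlp : (SimpleGraph.Walk.cons ha p).length = d v w := by
    rw [SimpleGraph.Walk.length_cons]; omega
  have hlq : (SimpleGraph.Walk.cons hb q).length = d v w := by
    rw [SimpleGraph.Walk.length_cons]; omega
  have heq : SimpleGraph.Walk.cons ha p = SimpleGraph.Walk.cons hb q := by
    refine path_eq_of_length_add_lt_egirth
      (SimpleGraph.Walk.isPath_of_length_eq_dist _ hlp)
      (SimpleGraph.Walk.isPath_of_length_eq_dist _ hlq) ?_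
    rw [hΓ.2, hlp, hlq]
    exact_mod_cast (by omega : d v w + d v w < 12)
  injection heq

/-- If `a` is the neighbour of `v` closer to `w`, every other neighbour is farther from `w`. -/
theorem dist_of_ne_closer (hΓ : Γ.IsGenHexagon) {v w a b : Γ.Point ⊕ Γ.Line}
    (ha : Γ.incGraph.Adj v a) (hb : Γ.incGraph.Adj v b) (hab : b ≠ a) (hvw : d v w ≤ 5)
    (haw : d a w < d v w) : d b w = d v w + 1 := by
  rcases (hΓ.dist_adj hb w).symm with h | h
  · exact h
  · exact absurd (hΓ.closer_unique hb ha hvw (by omega) haw) hab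

end IsGenHexagon

theorem exists_ne_ne_of_three_le_encard {α : Type*} {s : Set α} (h : 3 ≤ s.encard) (a b : α) :
    ∃ c ∈ s, c ≠ a ∧ c ≠ b := by
  by_contra! hcon
  have hsub : s ⊆ {a, b} := by
    intro c hc
    by_cases hca : c = a
    · exact Or.inl hca
    · exact Or.inr (hcon c hc hca)
  have h2 : s.encard ≤ 2 := (Set.encard_le_encard hsub).trans (by
    refine (Set.encard_insert_le _ _).trans ?_
    rw [Set.encard_singleton]
    norm_num)
  exact absurd (h.trans h2) (by decide)

theorem Thick.exists_adj_ne (hth : Γ.Thick) (v a b : Γ.Point ⊕ Γ.Line) :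
    ∃ c, Γ.incGraph.Adj v c ∧ c ≠ a ∧ c ≠ b := by
  have key : 3 ≤ {c | Γ.incGraph.Adj v c}.encard := by
    rcases v with x | L
    · refine (hth.2 x).trans ?_
      rw [← Sum.inr_injective.encard_image (β := Γ.Point ⊕ Γ.Line)]
      refine Set.encard_le_encard ?_
      rintro _ ⟨L, hL, rfl⟩
      exact hL
    · refine (hth.1 L).trans ?_
      rw [← Sum.inl_injective.encard_image (β := Γ.Point ⊕ Γ.Line)]
      refine Set.encard_le_encard ?_
      rintro _ ⟨x, hx, rfl⟩
      exact hx
  exact exists_ne_ne_of_three_le_encard key a b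

/-- In a thick generalised hexagon, one can move away from any non-opposite vertex. -/
theorem IsGenHexagon.exists_farther (hΓ : Γ.IsGenHexagon) (hth : Γ.Thick)
    {v w : Γ.Point ⊕ Γ.Line} (h : d v w ≤ 5) :
    ∃ c, Γ.incGraph.Adj v c ∧ d c w = d v w + 1 := by
  by_cases h0 : d v w = 0
  · obtain ⟨c, hc, -⟩ := hth.exists_adj_ne v v v
    refine ⟨c, hc, ?_⟩
    have := hΓ.dist_adj hc w
    omega
  · obtain ⟨a, ha, haw⟩ := hΓ.exists_closer h0
    obtain ⟨c, hc, hca, -⟩ := hth.exists_adj_ne v a a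
    exact ⟨c, hc, hΓ.dist_of_ne_closer ha hc hca h (by omega)⟩

theorem d_comm (u v : Γ.Point ⊕ Γ.Line) : d u v = d v u := SimpleGraph.dist_comm

theorem d_of_adj {u v : Γ.Point ⊕ Γ.Line} (h : Γ.incGraph.Adj u v) : d u v = 1 :=
  SimpleGraph.dist_eq_one_iff_adj.2 h

theorem d_eq_one {u v : Γ.Point ⊕ Γ.Line} : d u v = 1 ↔ Γ.incGraph.Adj u v :=
  SimpleGraph.dist_eq_one_iff_adj

namespace IsGenHexagon

theorem dist_points_ne_zero (hΓ : Γ.IsGenHexagon) {x y : Γ.Point} :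
    d (Γ := Γ) (Sum.inl x) (Sum.inl y) ≠ 0 ↔ x ≠ y := by
  rw [Ne, hΓ.dist_eq_zero, Sum.inl.injEq]

/-- Two vertices at distance two have a common neighbour. -/
theorem exists_midpoint (hΓ : Γ.IsGenHexagon) {u v : Γ.Point ⊕ Γ.Line} (h : d u v = 2) :
    ∃ m, Γ.incGraph.Adj u m ∧ Γ.incGraph.Adj m v := by
  obtain ⟨m, hum, hm⟩ := hΓ.exists_closer (v := u) (w := v) (by omega)
  exact ⟨m, hum, d_eq_one.1 (by omega)⟩

theorem exists_line (hΓ : Γ.IsGenHexagon) {x y : Γ.Point}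
    (h : d (Γ := Γ) (Sum.inl x) (Sum.inl y) = 2) : ∃ L, x ∈ Γ.pts L ∧ y ∈ Γ.pts L := by
  obtain ⟨m, h1, h2⟩ := hΓ.exists_midpoint h
  obtain ⟨L, rfl⟩ := exists_inr_of_adj_inl h1
  exact ⟨L, h1, h2⟩

theorem collinear_iff (hΓ : Γ.IsGenHexagon) {x y : Γ.Point} :
    Γ.Collinear x y ↔ d (Γ := Γ) (Sum.inl x) (Sum.inl y) = 2 := by
  constructor
  · rintro ⟨hne, L, hx, hy⟩
    have h0 := hΓ.dist_points_ne_zero.2 hne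
    have h1 := d_of_adj (adj_inl_inr.2 hx)
    have h2 := d_of_adj (adj_inr_inl.2 hy)
    have ht := hΓ.triangle (Sum.inl x) (Sum.inr L) (Sum.inl y)
    have he := hΓ.even_points x y
    omega
  · intro h
    exact ⟨hΓ.dist_points_ne_zero.1 (by omega), hΓ.exists_line h⟩

theorem special_iff (hΓ : Γ.IsGenHexagon) {x y : Γ.Point} :
    Γ.Special x y ↔ d (Γ := Γ) (Sum.inl x) (Sum.inl y) = 4 := by
  unfold Special
  simp only [hΓ.collinear_iff]
  constructor
  · rintro ⟨hne, hnc, z, hx, hy⟩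
    have h0 := hΓ.dist_points_ne_zero.2 hne
    have ht := hΓ.triangle (Sum.inl x) (Sum.inl z) (Sum.inl y)
    have hc := d_comm (Γ := Γ) (Sum.inl z) (Sum.inl y)
    have he := hΓ.even_points x y
    omega
  · intro h
    refine ⟨hΓ.dist_points_ne_zero.1 (by omega), by omega, ?_⟩
    obtain ⟨m, hxm, hm⟩ := hΓ.exists_closer (v := Sum.inl x) (w := Sum.inl y) (by omega)
    obtain ⟨L, rfl⟩ := exists_inr_of_adj_inl hxm
    obtain ⟨n, hmn, hn⟩ := hΓ.exists_closer (v := Sum.inr L) (w := Sum.inl y) (by omega)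
    obtain ⟨z, rfl⟩ := exists_inl_of_adj_inr hmn
    refine ⟨z, ?_, ?_⟩
    · have h1 := d_of_adj hxm
      have h2 := d_of_adj hmn
      have t1 := hΓ.triangle (Sum.inl x) (Sum.inr L) (Sum.inl z)
      have t2 := hΓ.triangle (Sum.inl x) (Sum.inl z) (Sum.inl y)
      omega
    · have hc := d_comm (Γ := Γ) (Sum.inl z) (Sum.inl y)
      omega

theorem opposite_iff (hΓ : Γ.IsGenHexagon) {x y : Γ.Point} :
    Γ.Opposite x y ↔ d (Γ := Γ) (Sum.inl x) (Sum.inl y) = 6 := by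
  unfold Opposite
  rw [hΓ.collinear_iff, hΓ.special_iff, ← hΓ.dist_points_ne_zero]
  have he := hΓ.even_points x y
  have hl := hΓ.dist_le_six (Sum.inl x) (Sum.inl y)
  omega

theorem exists_projection (hΓ : Γ.IsGenHexagon) {x : Γ.Point} {L : Γ.Line}
    (h : d (Γ := Γ) (Sum.inl x) (Sum.inr L) = 3) :
    ∃ y, y ∈ Γ.pts L ∧ d (Γ := Γ) (Sum.inl x) (Sum.inl y) = 2 := by
  have hc := d_comm (Γ := Γ) (Sum.inl x) (Sum.inr L)
  obtain ⟨m, hm, hmx⟩ := hΓ.exists_closer (v := Sum.inr L) (w := Sum.inl x) (by omega)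
  obtain ⟨y, rfl⟩ := exists_inl_of_adj_inr hm
  have hc' := d_comm (Γ := Γ) (Sum.inl x) (Sum.inl y)
  exact ⟨y, hm, by omega⟩

theorem closeTo_iff (hΓ : Γ.IsGenHexagon) (hth : Γ.Thick) {x : Γ.Point} {L : Γ.Line} :
    Γ.CloseTo x L ↔ d (Γ := Γ) (Sum.inl x) (Sum.inr L) = 3 := by
  unfold CloseTo
  simp only [hΓ.collinear_iff]
  have hc := d_comm (Γ := Γ) (Sum.inl x) (Sum.inr L)
  constructor
  · rintro ⟨y, ⟨hyL, hxy⟩, huniq⟩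
    have ho := hΓ.odd_point_line x L
    have ht := hΓ.triangle (Sum.inl x) (Sum.inl y) (Sum.inr L)
    have h1 := d_of_adj (adj_inl_inr.2 hyL)
    by_contra h3
    have hxL : x ∈ Γ.pts L := adj_inl_inr.1 (d_eq_one.1 (by omega))
    obtain ⟨z, hz, hzx, hzy⟩ := exists_ne_ne_of_three_le_encard (hth.1 L) x y
    exact hzy (huniq z ⟨hz, hΓ.collinear_iff.1 ⟨hzx.symm, L, hxL, hz⟩⟩)
  · intro h
    obtain ⟨y, hy, hxy⟩ := hΓ.exists_projection h
    refine ⟨y, ⟨hy, hxy⟩, ?_⟩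
    rintro z ⟨hz, hxz⟩
    have h1 := d_comm (Γ := Γ) (Sum.inl x) (Sum.inl z)
    have h2 := d_comm (Γ := Γ) (Sum.inl x) (Sum.inl y)
    exact Sum.inl_injective (hΓ.closer_unique (v := Sum.inr L) (w := Sum.inl x)
      (adj_inr_inl.2 hz) (adj_inr_inl.2 hy) (by omega) (by omega) (by omega))

theorem oppLines_iff (hΓ : Γ.IsGenHexagon) (hth : Γ.Thick) {L M : Γ.Line} :
    Γ.OppLines L M ↔ d (Γ := Γ) (Sum.inr L) (Sum.inr M) = 6 := by
  unfold OppLines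
  simp only [hΓ.collinear_iff]
  constructor
  · rintro ⟨h1, h2⟩
    have he := hΓ.even_lines L M
    have hl := hΓ.dist_le_six (Sum.inr L) (Sum.inr M)
    by_contra h6
    have hx : ∃ x ∈ Γ.pts L, d (Γ := Γ) (Sum.inl x) (Sum.inr M) ≤ 3 := by
      by_cases h0 : d (Γ := Γ) (Sum.inr L) (Sum.inr M) = 0
      · obtain ⟨m, hm, hmM⟩ := hΓ.exists_farther hth
          (v := Sum.inr L) (w := Sum.inr M) (by omega)
        obtain ⟨x, rfl⟩ := exists_inl_of_adj_inr hm
        exact ⟨x, hm, by omega⟩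
      · obtain ⟨m, hm, hmM⟩ := hΓ.exists_closer h0
        obtain ⟨x, rfl⟩ := exists_inl_of_adj_inr hm
        exact ⟨x, hm, by omega⟩
    obtain ⟨x, hxL, hxM⟩ := hx
    have hodd := hΓ.odd_point_line x M
    have hn1 : d (Γ := Γ) (Sum.inl x) (Sum.inr M) ≠ 1 := fun h => h1 x hxL (d_eq_one.1 h)
    obtain ⟨y, hy, hxy⟩ := hΓ.exists_projection (x := x) (L := M) (by omega)
    exact h2 x hxL y hy hxy
  · intro h
    have h5 : ∀ x ∈ Γ.pts L, d (Γ := Γ) (Sum.inl x) (Sum.inr M) = 5 := by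
      intro x hx
      have ho := hΓ.dist_le_six (Sum.inl x) (Sum.inr M)
      have := hΓ.dist_adj (adj_inl_inr.2 hx) (Sum.inr M)
      omega
    refine ⟨fun x hx hxM => ?_, fun x hx y hy hxy => ?_⟩
    · have h1 := d_of_adj (adj_inl_inr.2 hxM)
      have := h5 x hx
      omega
    · have h1 := d_of_adj (adj_inl_inr.2 hy)
      have ht := hΓ.triangle (Sum.inl x) (Sum.inl y) (Sum.inr M)
      have := h5 x hx
      omega

end IsGenHexagon

namespace IsGeometricLine

variable {T : Set Γ.Point}

/-- A point not opposite two members of a geometric line is opposite no member of it. -/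
theorem not_opposite_of_two (hΓ : Γ.IsGenHexagon) (hT : Γ.IsGeometricLine T)
    {x y t u : Γ.Point} (hx : x ∈ T) (hy : y ∈ T) (hxy : x ≠ y) (ht : t ∈ T)
    (hux : d (Γ := Γ) (Sum.inl u) (Sum.inl x) ≤ 5)
    (huy : d (Γ := Γ) (Sum.inl u) (Sum.inl y) ≤ 5) :
    d (Γ := Γ) (Sum.inl u) (Sum.inl t) ≠ 6 := by
  rcases hT u with h | ⟨z, -, hz⟩
  · exact fun h6 => h t ht (hΓ.opposite_iff.2 h6)
  · refine absurd ((hz x ⟨hx, ?_⟩).trans (hz y ⟨hy, ?_⟩).symm) hxy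
    · rw [hΓ.opposite_iff]; omega
    · rw [hΓ.opposite_iff]; omega

/-- No point is opposite all members of a nonempty geometric line. -/
theorem exists_not_opposite (hΓ : Γ.IsGenHexagon) (hT : Γ.IsGeometricLine T)
    (hne : T.Nonempty) (u : Γ.Point) :
    ∃ t ∈ T, d (Γ := Γ) (Sum.inl u) (Sum.inl t) ≠ 6 := by
  rcases hT u with h | ⟨z, ⟨hz, hzu⟩, -⟩
  · obtain ⟨t, ht⟩ := hne
    exact ⟨t, ht, fun h6 => h t ht (hΓ.opposite_iff.2 h6)⟩
  · exact ⟨z, hz, fun h6 => hzu (hΓ.opposite_iff.2 h6)⟩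

/-- A geometric line with two collinear points is a line. -/
theorem eq_pts_of_collinear (hΓ : Γ.IsGenHexagon) (hth : Γ.Thick) (hT : Γ.IsGeometricLine T)
    {x y : Γ.Point} {L : Γ.Line} (hx : x ∈ T) (hy : y ∈ T) (hxy : x ≠ y)
    (hxL : x ∈ Γ.pts L) (hyL : y ∈ Γ.pts L) : T = Γ.pts L := by
  have near : ∀ u t : Γ.Point, t ∈ T → d (Γ := Γ) (Sum.inl u) (Sum.inr L) ≤ 3 →
      d (Γ := Γ) (Sum.inl u) (Sum.inl t) ≠ 6 := by
    intro u t ht hu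
    have h1 := d_of_adj (adj_inr_inl.2 hxL)
    have h2 := d_of_adj (adj_inr_inl.2 hyL)
    have t1 := hΓ.triangle (Sum.inl u) (Sum.inr L) (Sum.inl x)
    have t2 := hΓ.triangle (Sum.inl u) (Sum.inr L) (Sum.inl y)
    exact hT.not_opposite_of_two hΓ hx hy hxy ht (by omega) (by omega)
  have hsub : T ⊆ Γ.pts L := by
    intro t ht
    have ho := hΓ.odd_point_line t L
    have hl := hΓ.dist_le_six (Sum.inl t) (Sum.inr L)
    have hc := d_comm (Γ := Γ) (Sum.inl t) (Sum.inr L)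
    by_contra hn
    have hn1 : d (Γ := Γ) (Sum.inl t) (Sum.inr L) ≠ 1 := fun h => hn (d_eq_one.1 h)
    obtain ⟨m, hm, hmt⟩ := hΓ.exists_farther hth (v := Sum.inr L) (w := Sum.inl t) (by omega)
    obtain ⟨c, rfl⟩ := exists_inl_of_adj_inr hm
    have hcL := d_of_adj hm.symm
    have h6 := near c t ht (by omega)
    obtain ⟨m, hm', hmt'⟩ := hΓ.exists_farther hth (v := Sum.inl c) (w := Sum.inl t) (by omega)
    obtain ⟨N, rfl⟩ := exists_inr_of_adj_inl hm'
    obtain ⟨m, hm'', hmt''⟩ := hΓ.exists_farther hth (v := Sum.inr N) (w := Sum.inl t) (by omega)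
    obtain ⟨u, rfl⟩ := exists_inl_of_adj_inr hm''
    have h1 := d_of_adj hm'.symm
    have h2 := d_of_adj hm''.symm
    have t1 := hΓ.triangle (Sum.inl u) (Sum.inr N) (Sum.inl c)
    have t2 := hΓ.triangle (Sum.inl u) (Sum.inl c) (Sum.inr L)
    have := near u t ht (by omega)
    omega
  refine hsub.antisymm fun p hp => ?_
  by_contra hpT
  have e1 := d_of_adj (adj_inl_inr.2 hp)
  obtain ⟨m, h1, e2⟩ := hΓ.exists_farther hth (v := Sum.inl p) (w := Sum.inr L) (by omega)
  obtain ⟨n, h2, e3⟩ := hΓ.exists_farther hth (v := m) (w := Sum.inr L) (by omega)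
  obtain ⟨k, h3, e4⟩ := hΓ.exists_farther hth (v := n) (w := Sum.inr L) (by omega)
  obtain ⟨l, h4, e5⟩ := hΓ.exists_farther hth (v := k) (w := Sum.inr L) (by omega)
  obtain ⟨M, rfl⟩ := exists_inr_of_adj_inl h1
  obtain ⟨q, rfl⟩ := exists_inl_of_adj_inr h2
  obtain ⟨K, rfl⟩ := exists_inr_of_adj_inl h3
  obtain ⟨u, rfl⟩ := exists_inl_of_adj_inr h4
  have f1 := d_of_adj h1
  have f2 := d_of_adj h2
  have f3 := d_of_adj h3
  have f4 := d_of_adj h4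
  have t1 := hΓ.triangle (Sum.inl p) (Sum.inr M) (Sum.inl q)
  have t2 := hΓ.triangle (Sum.inl p) (Sum.inl q) (Sum.inr K)
  have t3 := hΓ.triangle (Sum.inl p) (Sum.inr K) (Sum.inl u)
  have hc := d_comm (Γ := Γ) (Sum.inl u) (Sum.inr L)
  obtain ⟨t, ht, htu⟩ := hT.exists_not_opposite hΓ ⟨x, hx⟩ u
  have htp : (Sum.inl t : Γ.Point ⊕ Γ.Line) ≠ Sum.inl p := fun h =>
    hpT (Sum.inl_injective h ▸ ht)
  have := hΓ.dist_of_ne_closer (w := Sum.inl u) (adj_inr_inl.2 hp) (adj_inr_inl.2 (hsub ht)) htp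
    (by omega) (by omega)
  have hc' := d_comm (Γ := Γ) (Sum.inl u) (Sum.inl t)
  omega

/-- A geometric line without collinear points but with two special points is a hyperbolic
line. -/
theorem isHyperbolicLine_of_special (hΓ : Γ.IsGenHexagon) (hth : Γ.Thick)
    (hT : Γ.IsGeometricLine T)
    (hnc : ∀ x ∈ T, ∀ y ∈ T, d (Γ := Γ) (Sum.inl x) (Sum.inl y) ≠ 2)
    {x y : Γ.Point} (hx : x ∈ T) (hy : y ∈ T) (hxy : Γ.Special x y) :
    Γ.IsHyperbolicLine T := by
  obtain ⟨hne, -, p, hxp, hyp⟩ := hxy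
  rw [hΓ.collinear_iff] at hxp hyp
  have cx := d_comm (Γ := Γ) (Sum.inl x) (Sum.inl p)
  have cy := d_comm (Γ := Γ) (Sum.inl y) (Sum.inl p)
  have near : ∀ u t : Γ.Point, t ∈ T → d (Γ := Γ) (Sum.inl u) (Sum.inl p) ≤ 2 →
      d (Γ := Γ) (Sum.inl u) (Sum.inl t) ≠ 6 := by
    intro u t ht hu
    have t1 := hΓ.triangle (Sum.inl u) (Sum.inl p) (Sum.inl x)
    have t2 := hΓ.triangle (Sum.inl u) (Sum.inl p) (Sum.inl y)
    exact hT.not_opposite_of_two hΓ hx hy hne ht (by omega) (by omega)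
  have hcol : ∀ t ∈ T, d (Γ := Γ) (Sum.inl t) (Sum.inl p) = 2 := by
    intro t ht
    have he := hΓ.even_points t p
    have hl := hΓ.dist_le_six (Sum.inl t) (Sum.inl p)
    have hc := d_comm (Γ := Γ) (Sum.inl t) (Sum.inl p)
    have h0 : d (Γ := Γ) (Sum.inl t) (Sum.inl p) ≠ 0 := by
      rw [hΓ.dist_points_ne_zero]
      rintro rfl
      exact hnc x hx t ht hxp
    have hpp : d (Γ := Γ) (Sum.inl p) (Sum.inl p) = 0 := hΓ.dist_eq_zero.2 rfl
    have h6 := near p t ht (by omega)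
    by_contra h2
    obtain ⟨m, h1, e1⟩ := hΓ.exists_farther hth (v := Sum.inl p) (w := Sum.inl t) (by omega)
    obtain ⟨M, rfl⟩ := exists_inr_of_adj_inl h1
    obtain ⟨n, h3, e3⟩ := hΓ.exists_farther hth (v := Sum.inr M) (w := Sum.inl t) (by omega)
    obtain ⟨u, rfl⟩ := exists_inl_of_adj_inr h3
    have f1 := d_of_adj h1.symm
    have f2 := d_of_adj h3.symm
    have t1 := hΓ.triangle (Sum.inl u) (Sum.inr M) (Sum.inl p)
    have := near u t ht (by omega)
    omega
  refine ⟨fun a ha b hb hab => ?_, p, fun t ht => hΓ.collinear_iff.2 (hcol t ht),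
    fun q hqp ⟨a, ⟨ha, hqa⟩, b, ⟨hb, hqb⟩, hab⟩ => ?_⟩
  · rw [hΓ.special_iff]
    have h0 := hΓ.dist_points_ne_zero.2 hab
    have h2 := hnc a ha b hb
    have he := hΓ.even_points a b
    have t1 := hΓ.triangle (Sum.inl a) (Sum.inl p) (Sum.inl b)
    have c1 := d_comm (Γ := Γ) (Sum.inl b) (Sum.inl p)
    have h3 := hcol a ha
    have h4 := hcol b hb
    omega
  rw [hΓ.opposite_iff] at hqp
  rw [hΓ.special_iff] at hqa hqb
  have hspec : ∀ t ∈ T, d (Γ := Γ) (Sum.inl q) (Sum.inl t) = 4 := by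
    intro t ht
    have h6 := hT.not_opposite_of_two hΓ ha hb hab ht (u := q) (by omega) (by omega)
    have hl := hΓ.dist_le_six (Sum.inl q) (Sum.inl t)
    have he := hΓ.even_points q t
    have t1 := hΓ.triangle (Sum.inl q) (Sum.inl t) (Sum.inl p)
    have h2 := hcol t ht
    omega
  ext z
  simp only [Set.mem_ofPred_eq, hΓ.special_iff, hΓ.collinear_iff]
  refine ⟨fun ⟨hqz, hzp⟩ => ?_, fun hz => ⟨hspec z hz, hcol z hz⟩⟩
  by_contra hzT
  obtain ⟨K, hzK, hpK⟩ := hΓ.exists_line hzp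
  obtain ⟨m, h1, e1⟩ := hΓ.exists_farther hth (v := Sum.inl z) (w := Sum.inl p) (by omega)
  obtain ⟨n, h2, e2⟩ := hΓ.exists_farther hth (v := m) (w := Sum.inl p) (by omega)
  obtain ⟨M, rfl⟩ := exists_inr_of_adj_inl h1
  obtain ⟨u, rfl⟩ := exists_inl_of_adj_inr h2
  obtain ⟨t, ht, htu⟩ := hT.exists_not_opposite hΓ ⟨x, hx⟩ u
  obtain ⟨K', htK', hpK'⟩ := hΓ.exists_line (hcol t ht)
  have hcu := d_comm (Γ := Γ) (Sum.inl u) (Sum.inl p)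
  have hpt : (Sum.inl t : Γ.Point ⊕ Γ.Line) ≠ Sum.inl p := fun h => by
    have h2 := hcol t ht
    have h0 := hΓ.dist_eq_zero.2 h
    omega
  by_cases hKK : K' = K
  · subst hKK
    have cq := d_comm (Γ := Γ) (Sum.inl q) (Sum.inl z)
    have cq' := d_comm (Γ := Γ) (Sum.inl q) (Sum.inl t)
    have cp := d_comm (Γ := Γ) (Sum.inl q) (Sum.inl p)
    have hqt := hspec t ht
    have hK5 := hΓ.dist_adj (adj_inr_inl.2 hzK) (Sum.inl q)
    have hK5' := hΓ.dist_adj (adj_inr_inl.2 hpK) (Sum.inl q)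
    have := hΓ.closer_unique (w := Sum.inl q) (adj_inr_inl.2 hzK) (adj_inr_inl.2 htK')
      (by omega) (by omega) (by omega)
    exact hzT (Sum.inl_injective this ▸ ht)
  · have f1 := d_of_adj h1
    have f2 := d_of_adj h2
    have f3 := d_of_adj (adj_inr_inl.2 hzK)
    have t1 := hΓ.triangle (Sum.inr K) (Sum.inl z) (Sum.inr M)
    have t2 := hΓ.triangle (Sum.inr K) (Sum.inr M) (Sum.inl u)
    have g1 := hΓ.dist_of_ne_closer (w := Sum.inl u) (adj_inl_inr.2 hpK) (adj_inl_inr.2 hpK')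
      (fun h => hKK (Sum.inr_injective h)) (by omega) (by omega)
    have g2 := hΓ.dist_of_ne_closer (w := Sum.inl u) (adj_inr_inl.2 hpK') (adj_inr_inl.2 htK')
      hpt (by omega) (by omega)
    have ct := d_comm (Γ := Γ) (Sum.inl u) (Sum.inl t)
    omega

/-- A geometric line of pairwise opposite points equals each distance-3 trace containing at
least two of its members. -/
theorem eq_trace3 (hΓ : Γ.IsGenHexagon) (hth : Γ.Thick) (hT : Γ.IsGeometricLine T)
    (hopp : ∀ x ∈ T, ∀ y ∈ T, x ≠ y → d (Γ := Γ) (Sum.inl x) (Sum.inl y) = 6)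
    {L M : Γ.Line} (hLM : Γ.OppLines L M) {x y : Γ.Point} (hx : x ∈ T) (hy : y ∈ T)
    (hxy : x ≠ y) (hxLM : x ∈ Γ.trace3 L M) (hyLM : y ∈ Γ.trace3 L M) :
    T = Γ.trace3 L M := by
  have mem_iff : ∀ z, z ∈ Γ.trace3 L M ↔ d (Γ := Γ) (Sum.inl z) (Sum.inr L) = 3 ∧
      d (Γ := Γ) (Sum.inl z) (Sum.inr M) = 3 := fun z => by
    rw [← hΓ.closeTo_iff hth, ← hΓ.closeTo_iff hth]; rfl
  rw [hΓ.oppLines_iff hth] at hLM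
  rw [mem_iff] at hxLM hyLM
  have dist_three : ∀ N : Γ.Line, d (Γ := Γ) (Sum.inl x) (Sum.inr N) = 3 →
      d (Γ := Γ) (Sum.inl y) (Sum.inr N) = 3 →
      ∀ t ∈ T, d (Γ := Γ) (Sum.inl t) (Sum.inr N) = 3 := by
    intro N hxN hyN t ht
    have ho := hΓ.odd_point_line t N
    have hl := hΓ.dist_le_six (Sum.inl t) (Sum.inr N)
    have cx := d_comm (Γ := Γ) (Sum.inl x) (Sum.inr N)
    have cy := d_comm (Γ := Γ) (Sum.inl y) (Sum.inr N)
    have ct := d_comm (Γ := Γ) (Sum.inl t) (Sum.inr N)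
    have h1 : d (Γ := Γ) (Sum.inl t) (Sum.inr N) ≠ 1 := by
      intro h1
      have h6 := hopp t ht x hx (by rintro rfl; omega)
      have t1 := hΓ.triangle (Sum.inl t) (Sum.inr N) (Sum.inl x)
      omega
    by_contra h3
    obtain ⟨m, hm, e⟩ := hΓ.exists_farther hth (v := Sum.inr N) (w := Sum.inl t) (by omega)
    obtain ⟨c, rfl⟩ := exists_inl_of_adj_inr hm
    have f := d_of_adj hm.symm
    have t1 := hΓ.triangle (Sum.inl c) (Sum.inr N) (Sum.inl x)
    have t2 := hΓ.triangle (Sum.inl c) (Sum.inr N) (Sum.inl y)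
    have := hT.not_opposite_of_two hΓ hx hy hxy ht (u := c) (by omega) (by omega)
    omega
  have hTL := dist_three L hxLM.1 hyLM.1
  have hTM := dist_three M hxLM.2 hyLM.2
  ext z
  rw [mem_iff]
  refine ⟨fun hz => ⟨hTL z hz, hTM z hz⟩, fun ⟨hzL, hzM⟩ => ?_⟩
  by_contra hzT
  obtain ⟨l, hl, hzl⟩ := hΓ.exists_projection hzL
  have hlL := d_of_adj (adj_inl_inr.2 hl)
  obtain ⟨m, h1, e1⟩ := hΓ.exists_farther hth (v := Sum.inl l) (w := Sum.inr L) (by omega)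
  obtain ⟨n, h2, e2⟩ := hΓ.exists_farther hth (v := m) (w := Sum.inr L) (by omega)
  obtain ⟨A, rfl⟩ := exists_inr_of_adj_inl h1
  obtain ⟨u, rfl⟩ := exists_inl_of_adj_inr h2
  obtain ⟨t, ht, htu⟩ := hT.exists_not_opposite hΓ ⟨x, hx⟩ u
  obtain ⟨k, hk, htk⟩ := hΓ.exists_projection (hTL t ht)
  obtain ⟨W, htW, hkW⟩ := hΓ.exists_line htk
  have htL := hTL t ht
  have htM := hTM t ht
  by_cases hkl : k = l
  · subst hkl
    obtain ⟨Z, hzZ, hkZ⟩ := hΓ.exists_line hzl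
    have hk5 := hΓ.dist_adj (adj_inl_inr.2 hk) (Sum.inr M)
    have hk6 := hΓ.dist_le_six (Sum.inl k) (Sum.inr M)
    have hZ := hΓ.dist_adj (adj_inl_inr.2 hzZ) (Sum.inr M)
    have hZ' := hΓ.dist_adj (adj_inl_inr.2 hkZ) (Sum.inr M)
    have hW := hΓ.dist_adj (adj_inl_inr.2 htW) (Sum.inr M)
    have hW' := hΓ.dist_adj (adj_inl_inr.2 hkW) (Sum.inr M)
    have hZW : Z = W := Sum.inr_injective (hΓ.closer_unique (w := Sum.inr M)
      (adj_inl_inr.2 hkZ) (adj_inl_inr.2 hkW) (by omega) (by omega) (by omega))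
    subst hZW
    have := hΓ.closer_unique (w := Sum.inr M)
      (adj_inr_inl.2 hzZ) (adj_inr_inl.2 htW) (by omega) (by omega) (by omega)
    exact hzT (Sum.inl_injective this ▸ ht)
  · have cu := d_comm (Γ := Γ) (Sum.inl u) (Sum.inr L)
    have f1 := d_of_adj h1
    have f2 := d_of_adj h2
    have t1 := hΓ.triangle (Sum.inl l) (Sum.inr A) (Sum.inl u)
    have g1 := hΓ.dist_of_ne_closer (w := Sum.inl u) (adj_inr_inl.2 hl) (adj_inr_inl.2 hk)
      (fun h => hkl (Sum.inl_injective h)) (by omega) (by omega)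
    have hWL : (Sum.inr W : Γ.Point ⊕ Γ.Line) ≠ Sum.inr L := by
      intro h
      have := d_of_adj (adj_inl_inr.2 htW)
      rw [h] at this
      omega
    have g2 := hΓ.dist_of_ne_closer (w := Sum.inl u) (adj_inl_inr.2 hk) (adj_inl_inr.2 hkW)
      hWL (by omega) (by omega)
    have g3 := hΓ.dist_of_ne_closer (w := Sum.inl u) (adj_inr_inl.2 hkW) (adj_inr_inl.2 htW)
      (fun h => by have := hΓ.dist_eq_zero.2 h; omega) (by omega) (by omega)
    have ct := d_comm (Γ := Γ) (Sum.inl u) (Sum.inl t)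
    omega

end IsGeometricLine

/-- Two opposite points are both contained in a distance-3 trace. -/
theorem IsGenHexagon.exists_trace3 (hΓ : Γ.IsGenHexagon) (hth : Γ.Thick) {x y : Γ.Point}
    (hxy : d (Γ := Γ) (Sum.inl x) (Sum.inl y) = 6) :
    ∃ L M, Γ.OppLines L M ∧ x ∈ Γ.trace3 L M ∧ y ∈ Γ.trace3 L M := by
  have middle : ∀ A, x ∈ Γ.pts A → ∃ a L, a ∈ Γ.pts A ∧ a ∈ Γ.pts L ∧ a ≠ x ∧ L ≠ A ∧
      d (Γ := Γ) (Sum.inl x) (Sum.inr L) = 3 ∧ d (Γ := Γ) (Sum.inl y) (Sum.inr L) = 3 := by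
    intro A hA
    have h5 := hΓ.dist_adj (adj_inl_inr.2 hA) (Sum.inl y)
    have h6 := hΓ.dist_le_six (Sum.inr A) (Sum.inl y)
    obtain ⟨m, h1, e1⟩ := hΓ.exists_closer (v := Sum.inr A) (w := Sum.inl y) (by omega)
    obtain ⟨n, h2, e2⟩ := hΓ.exists_closer (v := m) (w := Sum.inl y) (by omega)
    obtain ⟨a, rfl⟩ := exists_inl_of_adj_inr h1
    obtain ⟨L, rfl⟩ := exists_inr_of_adj_inl h2
    have f0 := d_of_adj (adj_inl_inr.2 hA)
    have f1 := d_of_adj h1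
    have f2 := d_of_adj h2
    have t1 := hΓ.triangle (Sum.inl x) (Sum.inr A) (Sum.inl a)
    have t2 := hΓ.triangle (Sum.inl x) (Sum.inl a) (Sum.inr L)
    have t3 := hΓ.triangle (Sum.inl x) (Sum.inr L) (Sum.inl y)
    have c := d_comm (Γ := Γ) (Sum.inl y) (Sum.inr L)
    exact ⟨a, L, h1, h2, by rintro rfl; omega, by rintro rfl; omega, by omega, by omega⟩
  obtain ⟨m, hm, -⟩ := hth.exists_adj_ne (Sum.inl x) (Sum.inl x) (Sum.inl x)
  obtain ⟨A, rfl⟩ := exists_inr_of_adj_inl hm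
  obtain ⟨n, hn, hnA, -⟩ := hth.exists_adj_ne (Sum.inl x) (Sum.inr A) (Sum.inr A)
  obtain ⟨B, rfl⟩ := exists_inr_of_adj_inl hn
  obtain ⟨a, L, haA, haL, hax, hLA, hxL, hyL⟩ := middle A hm
  obtain ⟨b, M, hbB, hbM, -, -, hxM, hyM⟩ := middle B hn
  refine ⟨L, M, (hΓ.oppLines_iff hth).2 ?_,
    ⟨(hΓ.closeTo_iff hth).2 hxL, (hΓ.closeTo_iff hth).2 hxM⟩,
    ⟨(hΓ.closeTo_iff hth).2 hyL, (hΓ.closeTo_iff hth).2 hyM⟩⟩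
  have f1 := d_of_adj (adj_inr_inl.2 hbB)
  have f2 := d_of_adj (adj_inl_inr.2 hbM)
  have t1 := hΓ.triangle (Sum.inr B) (Sum.inl b) (Sum.inr M)
  have g1 := hΓ.dist_of_ne_closer (w := Sum.inr M) hn hm hnA.symm (by omega) (by omega)
  have g2 := hΓ.dist_of_ne_closer (w := Sum.inr M) hm.symm (adj_inr_inl.2 haA)
    (fun h => hax (Sum.inl_injective h)) (by omega) (by omega)
  have g3 := hΓ.dist_of_ne_closer (w := Sum.inr M) (adj_inl_inr.2 haA) (adj_inl_inr.2 haL)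
    (fun h => hLA (Sum.inr_injective h)) (by omega) (by omega)
  omega

end GenHexagon

/-- A geometric line of a thick generalised hexagon containing at least two points is
a line, a hyperbolic line, or a regular distance-3 trace. -/
theorem geometricLine_classification (Γ : GenHexagon) (hΓ : Γ.IsGenHexagon)
    (hth : Γ.Thick) (T : Set Γ.Point) (hT : Γ.IsGeometricLine T) (hnt : T.Nontrivial) :
    (∃ L, T = Γ.pts L) ∨
    Γ.IsHyperbolicLine T ∨
    (∃ L M, Γ.OppLines L M ∧ T = Γ.trace3 L M ∧ Γ.RegularTrace3 L M) := by
  by_cases hcol : ∃ x ∈ T, ∃ y ∈ T, Γ.Collinear x y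
  · obtain ⟨x, hx, y, hy, hne, L, hxL, hyL⟩ := hcol
    exact Or.inl ⟨L, hT.eq_pts_of_collinear hΓ hth hx hy hne hxL hyL⟩
  push Not at hcol
  by_cases hspec : ∃ x ∈ T, ∃ y ∈ T, Γ.Special x y
  · obtain ⟨x, hx, y, hy, hxy⟩ := hspec
    exact Or.inr (Or.inl (hT.isHyperbolicLine_of_special hΓ hth
      (fun a ha b hb h => hcol a ha b hb (hΓ.collinear_iff.2 h)) hx hy hxy))
  push Not at hspec
  have hopp : ∀ x ∈ T, ∀ y ∈ T, x ≠ y →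
      GenHexagon.d (Γ := Γ) (Sum.inl x) (Sum.inl y) = 6 := fun x hx y hy hxy =>
    hΓ.opposite_iff.1 ⟨hxy, hcol x hx y hy, hspec x hx y hy⟩
  obtain ⟨x, hx, y, hy, hxy⟩ := hnt
  obtain ⟨L, M, hLM, hxLM, hyLM⟩ := hΓ.exists_trace3 hth (hopp x hx y hy hxy)
  have hTLM := hT.eq_trace3 hΓ hth hopp hLM hx hy hxy hxLM hyLM
  refine Or.inr (Or.inr ⟨L, M, hLM, hTLM, ?_⟩)
  rintro N hN ⟨a, ⟨haN, haL⟩, b, ⟨hbN, hbL⟩, hab⟩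
  rw [← hTLM] at haL hbL ⊢
  exact (hT.eq_trace3 hΓ hth hopp hN haL hbL hab haN hbN).symm
end
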